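/- arXiv:2504.20833 — 2 statements merged into one kernel-verified Lean document; each statement's English description precedes it below -/
import Mathlib

section
/- Let (Ω, F, P) be a probability space and for each t ≥ 0 let ν_t : Ω → P([0,∞)) be a random probability measure on [0,∞), i.e. a measurable map into the space of Borel probability measures on [0,∞) equipped with the topology of weak convergence. Assume: (i) for every r ≥ 0 there exists a real random variable F_r such that ν_t([r,∞)) → F_r in probability as t → ∞; (ii) for every ε > 0, lim_{M→∞} limsup_{t→∞} P(ν_t([M,∞)) > ε) = 0. Then there exists a random probability measure ν : Ω → P([0,∞)) such that ν_t converges weakly in probability to ν as t → ∞, i.e. for every bounded continuous function f : [0,∞) → ℝ, the random variables ∫ f dν_t converge in probability to ∫ f dν. Moreover, for every r ≥ 0, almost surely on the event that r is a continuity point of the map x ↦ ν([x,∞)), one has ν([r,∞)) = F_r. -/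
/-!
The limit is built pathwise from the `F q`, `q` rational, and convergence in probability is
reduced to almost sure convergence along subsequences.

By a Borel–Cantelli diagonal argument (`exists_subseq`), every sequence of times tending to
infinity has a subsequence along which, almost surely, the tails at all rationals converge
simultaneously to `F`. Hence almost surely `q ↦ F q` is antitone with value `1` at `0`; tightness
passes to the limit and gives `F q → 0` as `q → ∞` (the predicate `GoodTail`). The right limits of
`1 - F` then form a distribution function, whose Stieltjes measure `ν` depends measurably on `ω`
and satisfies `ν (q, ∞) ≤ F q ≤ ν [q, ∞)` for all rational `q ≥ 0` (`exists_limit`).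

These inequalities force the weak convergence, along the subsequence, to `ν`: at non-atoms of `ν`
the tails converge to those of `ν`, and half-open intervals with non-atomic endpoints form a
π-system containing small neighbourhoods of each point (`tendsto_of_tail`). As `ν` is the same for
all subsequences, integrals of bounded continuous functions converge in probability. For the last
assertion, a subsequence along which the tail at `r` converges too gives
`ν [x, ∞) ≤ F r ≤ ν [r, ∞)` for `x > r`, and continuity at `r` closes the gap.
-/

open MeasureTheory Filter
open scoped NNReal
open Set Topology ProbabilityTheory

/-! ### Almost sure convergence along subsequences -/

/-- Diagonal Borel–Cantelli extraction: countably many sequences tending to `0` in probability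
have a common subsequence along which they all tend to `0` almost surely. -/
lemma exists_subseq {Ω : Type*} [MeasurableSpace Ω] (P : Measure Ω) (Y : ℕ → ℕ → Ω → ℝ)
    (h : ∀ k, ∀ δ > (0 : ℝ), Tendsto (fun n => P {ω | δ < |Y n k ω|}) atTop (𝓝 0)) :
    ∃ φ : ℕ → ℕ, StrictMono φ ∧
      ∀ᵐ ω ∂P, ∀ k, Tendsto (fun n => Y (φ n) k ω) atTop (𝓝 0) := by
  have hev : ∀ n : ℕ, ∀ᶠ m in atTop, ∀ k ∈ Finset.range (n + 1),
      P {ω | (1 / 2 : ℝ) ^ n < |Y m k ω|} < (1 / 2 : ENNReal) ^ n := by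
    intro n
    rw [Filter.eventually_all_finset]
    intro k _
    exact (h k _ (by positivity)).eventually_lt_const (by
      apply ENNReal.pow_pos; norm_num)
  obtain ⟨φ, hφ, hP⟩ := extraction_forall_of_eventually hev
  refine ⟨φ, hφ, ae_all_iff.2 fun k => ?_⟩
  have hsum : ∑' n, P {ω | (1 / 2 : ℝ) ^ (n + k) < |Y (φ (n + k)) k ω|} ≠ ⊤ := by
    refine ne_top_of_le_ne_top (b := ∑' n : ℕ, (1 / 2 : ENNReal) ^ n) ?_ ?_
    · rw [ENNReal.tsum_geometric]; norm_num
    · refine ENNReal.tsum_le_tsum fun n => (hP (n + k) k (by simp)).le.trans ?_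
      exact pow_le_pow_of_le_one (by simp) (by norm_num) (Nat.le_add_right n k)
  filter_upwards [ae_eventually_notMem hsum] with ω hω
  rw [← tendsto_add_atTop_iff_nat k, tendsto_zero_iff_abs_tendsto_zero]
  refine squeeze_zero' (Eventually.of_forall fun n => abs_nonneg _)
    (hω.mono fun n hn => not_lt.1 hn) ?_
  exact (tendsto_add_atTop_iff_nat k).2
    (tendsto_pow_atTop_nhds_zero_of_lt_one (by norm_num) (by norm_num))

/-! ### Weak convergence from convergence of tails -/

/-- Continuity from below of `ν` along `[d, ∞) ↑ (c, ∞)`. -/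
lemma exists_lt_real_Ici (ν : Measure ℝ≥0) [IsFiniteMeasure ν] {c : ℝ≥0} {e : ℝ}
    (he : e < ν.real (Ioi c)) : ∃ d, c < d ∧ e < ν.real (Ici d) := by
  obtain ⟨u, hu, hu1, hu2⟩ := exists_seq_strictAnti_tendsto c
  have hU : Ioi c = ⋃ n, Ici (u n) := by
    ext x
    simp only [mem_Ioi, mem_iUnion, mem_Ici]
    exact ⟨fun hx => ((hu2.eventually_lt_const hx).exists).imp fun n hn => hn.le,
      fun ⟨n, hn⟩ => (hu1 n).trans_le hn⟩
  have hT : Tendsto (fun n => ν.real (Ici (u n))) atTop (𝓝 (ν.real (Ioi c))) := by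
    rw [hU]
    exact (ENNReal.tendsto_toReal (measure_ne_top _ _)).comp
      (tendsto_measure_iUnion_atTop fun m n hmn => Ici_subset_Ici.2 (hu.antitone hmn))
  obtain ⟨n, hn⟩ := (hT.eventually_const_lt he).exists
  exact ⟨u n, hu1 n, hn⟩

/-- Continuity from above of `ν` along `[d, ∞) ↓ [c, ∞)`. -/
lemma exists_real_Ici_lt (ν : Measure ℝ≥0) [IsFiniteMeasure ν] {c : ℝ≥0} (hc : 0 < c) {e : ℝ}
    (he : ν.real (Ici c) < e) : ∃ d < c, ν.real (Ici d) < e := by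
  obtain ⟨u, hu, hu1, hu2⟩ := exists_seq_strictMono_tendsto' hc
  have hU : Ici c = ⋂ n, Ici (u n) := by
    ext x
    simp only [mem_iInter, mem_Ici]
    exact ⟨fun hx n => (hu1 n).2.le.trans hx, fun h => le_of_tendsto' hu2 h⟩
  have hT : Tendsto (fun n => ν.real (Ici (u n))) atTop (𝓝 (ν.real (Ici c))) := by
    rw [hU]
    exact (ENNReal.tendsto_toReal (measure_ne_top _ _)).comp
      (tendsto_measure_iInter_atTop (fun n => measurableSet_Ici.nullMeasurableSet)
        (fun m n hmn => Ici_subset_Ici.2 (hu.monotone hmn)) ⟨0, measure_ne_top _ _⟩)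
  obtain ⟨n, hn⟩ := (hT.eventually_lt_const he).exists
  exact ⟨u n, (hu1 n).2, hn⟩

/-- Weak convergence from convergence of tails on a dense set `D`, where the limit `g` of the tails
need only lie between `ν (d, ∞)` and `ν [d, ∞)`. -/
lemma tendsto_of_tail {μ : ℕ → ProbabilityMeasure ℝ≥0} {ν : ProbabilityMeasure ℝ≥0}
    {D : Set ℝ≥0} (hD : Dense D) {g : ℝ≥0 → ℝ}
    (hg : ∀ d ∈ D, Tendsto (fun n => (μ n : Measure ℝ≥0).real (Ici d)) atTop (𝓝 (g d)))
    (hlo : ∀ d ∈ D, (ν : Measure ℝ≥0).real (Ioi d) ≤ g d)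
    (hhi : ∀ d ∈ D, g d ≤ (ν : Measure ℝ≥0).real (Ici d)) :
    Tendsto μ atTop (𝓝 ν) := by
  -- The point `0` is admitted even if it is an atom, since `[0, ∞)` always has mass `1`.
  set C : Set ℝ≥0 := {c | c = 0 ∨ (ν : Measure ℝ≥0) {c} = 0} with hC
  have key : ∀ c ∈ C, Tendsto (fun n => (μ n : Measure ℝ≥0).real (Ici c)) atTop
      (𝓝 ((ν : Measure ℝ≥0).real (Ici c))) := by
    intro c hc
    rcases eq_or_ne c 0 with rfl | hc0
    · have : Ici (0 : ℝ≥0) = univ := by ext; simp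
      simp [this]
    have hc' : (ν : Measure ℝ≥0) {c} = 0 := hc.resolve_left hc0
    have hpos : 0 < c := pos_iff_ne_zero.2 hc0
    have hIci : (ν : Measure ℝ≥0).real (Ici c) = (ν : Measure ℝ≥0).real (Ioi c) := by
      simp only [Measure.real]
      congr 1
      exact measure_congr (Ioi_ae_eq_Ici' hc').symm
    rw [tendsto_order]
    constructor
    · intro e he
      rw [hIci] at he
      obtain ⟨d, hcd, hd⟩ := exists_lt_real_Ici _ he
      obtain ⟨d', hd'D, hcd', hd'⟩ := hD.exists_between hcd
      have h1 : e < g d' := hd.trans_le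
        ((measureReal_mono (Ici_subset_Ioi.2 hd')).trans (hlo d' hd'D))
      filter_upwards [(hg d' hd'D).eventually_const_lt h1] with n hn
      exact hn.trans_le (measureReal_mono (Ici_subset_Ici.2 hcd'.le))
    · intro e he
      obtain ⟨d, hcd, hd⟩ := exists_real_Ici_lt _ hpos he
      obtain ⟨d', hd'D, hdd', hd'⟩ := hD.exists_between hcd
      have h1 : g d' < e := ((hhi d' hd'D).trans
        (measureReal_mono (Ici_subset_Ici.2 hdd'.le))).trans_lt hd
      filter_upwards [(hg d' hd'D).eventually_lt_const h1] with n hn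
      exact (measureReal_mono (Ici_subset_Ici.2 hd'.le)).trans_lt hn
  have hdense : ∀ a b : ℝ≥0, a < b → ∃ c ∈ C, a < c ∧ c < b := by
    intro a b hab
    have hcount : {c : ℝ≥0 | 0 < (ν : Measure ℝ≥0) {c}}.Countable :=
      Measure.countable_meas_pos_of_disjoint_iUnion (fun c => measurableSet_singleton c)
        fun x y hxy => by simpa [Function.onFun] using hxy
    -- Density of the complement is available in `ℝ` only, so the atoms are transported there.
    obtain ⟨c, hc, hac, hcb⟩ :=
      ((hcount.image NNReal.toReal).dense_compl ℝ).exists_between (NNReal.coe_lt_coe.2 hab)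
    lift c to ℝ≥0 using a.2.trans hac.le
    refine ⟨c, Or.inr ?_, mod_cast hac, mod_cast hcb⟩
    by_contra h
    exact hc ⟨c, pos_iff_ne_zero.2 h, rfl⟩
  have hIco : ∀ a b : ℝ≥0, ∀ ρ : ProbabilityMeasure ℝ≥0,
      (ρ : Measure ℝ≥0).real (Ico a b) = (ρ : Measure ℝ≥0).real (Ici a) -
        (ρ : Measure ℝ≥0).real (Ici (max a b)) := by
    intro a b ρ
    rw [← measureReal_sdiff (Ici_subset_Ici.2 (le_max_left a b)) measurableSet_Ici]
    congr 1
    ext x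
    simp
    grind
  refine IsPiSystem.tendsto_probabilityMeasure_of_tendsto_of_mem
    (S := {s | ∃ a ∈ C, ∃ b ∈ C, s = Ico a b}) ?_ ?_ ?_ ?_
  · rintro _ ⟨a, ha, b, hb, rfl⟩ _ ⟨a', ha', b', hb', rfl⟩ _
    refine ⟨max a a', ?_, min b b', ?_, Ico_inter_Ico⟩
    · rcases max_choice a a' with h | h <;> rw [h] <;> assumption
    · rcases min_choice b b' with h | h <;> rw [h] <;> assumption
  · rintro _ ⟨a, ha, b, hb, rfl⟩
    exact measurableSet_Ico
  · intro u hu x hx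
    obtain ⟨b, hxb, hb⟩ := exists_Ico_subset_of_mem_nhds (hu.mem_nhds hx) ⟨x + 1, by simp⟩
    obtain ⟨b', hb', hxb', hbb'⟩ := hdense x b hxb
    rcases eq_or_ne x 0 with rfl | hx0
    · refine ⟨Ico 0 b', ⟨0, Or.inl rfl, b', hb', rfl⟩, ?_,
        (Ico_subset_Ico_right hbb'.le).trans hb⟩
      have : Ico 0 b' = Iio b' := by ext; simp
      exact this ▸ Iio_mem_nhds hxb'
    · obtain ⟨a, hax, ha⟩ := exists_Ioc_subset_of_mem_nhds (hu.mem_nhds hx)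
        ⟨0, pos_iff_ne_zero.2 hx0⟩
      obtain ⟨a', ha', haa', hax'⟩ := hdense a x hax
      refine ⟨Ico a' b', ⟨a', ha', b', hb', rfl⟩, Ico_mem_nhds hax' hxb', fun y hy => ?_⟩
      rcases le_total y x with h | h
      · exact ha ⟨haa'.trans_le hy.1, h⟩
      · exact hb ⟨h, hy.2.trans hbb'⟩
  · rintro _ ⟨a, ha, b, hb, rfl⟩
    have hm : max a b ∈ C := by
      rcases max_choice a b with h | h <;> rw [h] <;> assumption
    have := (key a ha).sub (key _ hm)
    simp only [← hIco] at this
    exact NNReal.tendsto_coe.1 this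

/-! ### Random measures from random tail functions -/

/-- The rational distribution function attached to a tail function `g`: the right limits of
`1 - g`, written as infima because `1 - g` is monotone in the case of interest. -/
noncomputable def rightLimCDF (g : ℚ → ℝ) (q : ℚ) : ℝ := ⨅ r : Ioi q, (1 - g r)

/-- `g` has the properties of a limit of tail functions `q ↦ μ [max q 0, ∞)` of probability measures
with no mass lost at infinity. No one-sided continuity is required. -/
structure GoodTail (g : ℚ → ℝ) : Prop where
  anti : Antitone g
  one : ∀ q ≤ 0, g q = 1
  zero : Tendsto g atTop (𝓝 0)

lemma GoodTail.nonneg {g : ℚ → ℝ} (h : GoodTail g) (q : ℚ) : 0 ≤ g q :=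
  h.anti.le_of_tendsto h.zero q

lemma GoodTail.le_one {g : ℚ → ℝ} (h : GoodTail g) (q : ℚ) : g q ≤ 1 := by
  rw [← h.one (min q 0) (min_le_right _ _)]
  exact h.anti (min_le_left _ _)

lemma GoodTail.bdd {g : ℚ → ℝ} (h : GoodTail g) (q : ℚ) :
    BddBelow (range fun r : Ioi q => 1 - g r) :=
  ⟨0, by rintro _ ⟨r, rfl⟩; have := h.le_one r; simp only; linarith⟩

lemma GoodTail.le_rightLimCDF {g : ℚ → ℝ} (h : GoodTail g) (q : ℚ) : 1 - g q ≤ rightLimCDF g q := by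
  refine le_ciInf fun r => ?_
  have := h.anti (le_of_lt r.2)
  linarith

lemma GoodTail.rightLimCDF_le {g : ℚ → ℝ} (h : GoodTail g) {q r : ℚ} (hqr : q < r) :
    rightLimCDF g q ≤ 1 - g r :=
  ciInf_le (h.bdd q) (⟨r, hqr⟩ : Ioi q)

lemma GoodTail.isRatStieltjesPoint {Ω : Type*} {G : Ω → ℚ → ℝ} {ω : Ω} (h : GoodTail (G ω)) :
    IsRatStieltjesPoint (fun ω => rightLimCDF (G ω)) ω where
  mono q r hqr := by
    refine le_ciInf fun s => h.rightLimCDF_le (hqr.trans_lt s.2)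
  tendsto_atTop_one := by
    refine tendsto_of_tendsto_of_tendsto_of_le_of_le (g := fun q => 1 - G ω q) (h := fun _ => 1)
      (by simpa using h.zero.const_sub 1) tendsto_const_nhds h.le_rightLimCDF fun q => ?_
    have := h.nonneg (q + 1)
    exact (h.rightLimCDF_le (lt_add_one q)).trans (by linarith)
  tendsto_atBot_zero := by
    refine tendsto_const_nhds.congr' ?_
    filter_upwards [eventually_lt_atBot 0] with q hq
    apply le_antisymm
    · exact (by simpa [h.one q hq.le] using h.le_rightLimCDF q)
    · simpa [h.one 0 le_rfl] using h.rightLimCDF_le hq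
  iInf_rat_gt_eq t := by
    apply le_antisymm
    · refine le_ciInf fun s => ?_
      obtain ⟨r, htr, hrs⟩ := exists_between (show t < s from s.2)
      refine (ciInf_le ⟨0, ?_⟩ (⟨r, htr⟩ : Ioi t)).trans (h.rightLimCDF_le hrs)
      rintro _ ⟨r, rfl⟩
      have := h.le_rightLimCDF r
      have := h.le_one r
      simp only
      linarith
    · refine le_ciInf fun r => le_ciInf fun s => h.rightLimCDF_le ?_
      exact lt_trans r.2 s.2

/-- Measurable construction of a random probability measure `ν` from a random tail function `G`. For
negative `q`, `Real.toNNReal q = 0` and the bounds concern the tails at `0`. -/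
lemma exists_limit {Ω : Type*} [MeasurableSpace Ω] (G : Ω → ℚ → ℝ) (hG : ∀ q, Measurable (G · q)) :
    ∃ ν : Ω → Measure ℝ≥0, Measurable ν ∧ (∀ ω, IsProbabilityMeasure (ν ω)) ∧
      ∀ ω, GoodTail (G ω) → ∀ q : ℚ, (ν ω).real (Ioi (Real.toNNReal q)) ≤ G ω q ∧
        G ω q ≤ (ν ω).real (Ici (Real.toNNReal q)) := by
  have hf : Measurable fun ω => rightLimCDF (G ω) := by
    refine measurable_pi_iff.2 fun q => Measurable.iInf fun r => (hG r).const_sub 1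
  refine ⟨fun ω => (stieltjesOfMeasurableRat _ hf ω).measure.map Real.toNNReal,
    (Measure.measurable_map _ measurable_real_toNNReal).comp
      (measurable_measure_stieltjesOfMeasurableRat hf),
    fun ω => Measure.isProbabilityMeasure_map measurable_real_toNNReal.aemeasurable, ?_⟩
  intro ω h q
  have hIoi (r : ℚ) : (stieltjesOfMeasurableRat _ hf ω).measure.real (Ioi (r : ℝ)) =
      1 - rightLimCDF (G ω) r := by
    rw [Measure.real, StieltjesFunction.measure_Ioi _ (tendsto_stieltjesOfMeasurableRat_atTop hf ω),
      ENNReal.toReal_ofReal (by linarith [stieltjesOfMeasurableRat_le_one hf ω r]),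
      stieltjesOfMeasurableRat_eq, toRatCDF_of_isRatStieltjesPoint h.isRatStieltjesPoint]
  rw [map_measureReal_apply measurable_real_toNNReal measurableSet_Ioi,
    map_measureReal_apply measurable_real_toNNReal measurableSet_Ici]
  constructor
  · have hsub : Real.toNNReal ⁻¹' Ioi (Real.toNNReal q) ⊆ Ioi (q : ℝ) :=
      fun x hx => lt_of_not_ge fun hle => (Real.toNNReal_mono hle).not_gt hx
    refine (measureReal_mono hsub).trans ?_
    rw [hIoi]
    linarith [h.le_rightLimCDF q]
  · have hsub : Ici (q : ℝ) ⊆ Real.toNNReal ⁻¹' Ici (Real.toNNReal q) :=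
      fun x hx => Real.toNNReal_mono hx
    refine le_trans ?_ (measureReal_mono hsub)
    -- `[q, ∞)` is the decreasing limit of the `(r, ∞)`, `r < q` rational, of mass at least `G ω q`.
    by_contra! hlt
    have hU : Ici (q : ℝ) = ⋂ n : ℕ, Ioi (((q - 1 / (n + 1) : ℚ)) : ℝ) := by
      ext x
      simp only [mem_Ici, mem_iInter, mem_Ioi]
      push_cast
      constructor
      · intro hx n
        have : (0 : ℝ) < 1 / (n + 1) := by positivity
        linarith
      · intro hx
        by_contra! hxq
        obtain ⟨n, hn⟩ := exists_nat_one_div_lt (sub_pos.2 hxq)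
        linarith [hx n]
    have hT : Tendsto (fun n : ℕ => (stieltjesOfMeasurableRat _ hf ω).measure.real
        (Ioi (((q - 1 / (n + 1) : ℚ)) : ℝ))) atTop
        (𝓝 ((stieltjesOfMeasurableRat _ hf ω).measure.real (Ici (q : ℝ)))) := by
      rw [hU]
      refine (ENNReal.tendsto_toReal (measure_ne_top _ _)).comp
        (tendsto_measure_iInter_atTop (fun n => measurableSet_Ioi.nullMeasurableSet)
          (fun m n hmn => Ioi_subset_Ioi ?_) ⟨0, measure_ne_top _ _⟩)
      gcongr
    obtain ⟨n, hn⟩ := (hT.eventually_lt_const hlt).exists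
    rw [hIoi] at hn
    have := h.rightLimCDF_le (show q - 1 / (n + 1) < q by simp; positivity)
    linarith

/-! ### Convergence of random measures in probability -/

/-- Characterization of weak convergence in probability for random probability
measures on `[0, ∞)` (modelled as `ℝ≥0`): if the tail masses `ν_t([r, ∞))`
converge in probability to `F_r` for every `r ≥ 0`, and the family is tight in
probability, then there is a random probability measure `ν` such that
`∫ f dν_t → ∫ f dν` in probability for every bounded continuous `f`, and
almost surely `ν([r, ∞)) = F_r` whenever `r` is a continuity point of
`x ↦ ν([x, ∞))`. -/
theorem random_measure_weak_convergence_characterization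
    {Ω : Type*} [MeasurableSpace Ω] (P : Measure Ω) [IsProbabilityMeasure P]
    (ν : ℝ → Ω → Measure ℝ≥0)
    (hmeas : ∀ t, Measurable (ν t))
    (hprob : ∀ t ω, IsProbabilityMeasure (ν t ω))
    (F : ℝ≥0 → Ω → ℝ) (hF : ∀ r, Measurable (F r))
    (hconv : ∀ r : ℝ≥0, ∀ δ > (0 : ℝ),
      Tendsto (fun t => P {ω | δ < |((ν t ω) (Set.Ici r)).toReal - F r ω|})
        atTop (nhds 0))
    (htight : ∀ ε > (0 : ℝ),
      Tendsto (fun M : ℝ≥0 =>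
          limsup (fun t => P {ω | ε < ((ν t ω) (Set.Ici M)).toReal}) atTop)
        atTop (nhds 0)) :
    ∃ νl : Ω → Measure ℝ≥0,
      Measurable νl ∧ (∀ ω, IsProbabilityMeasure (νl ω)) ∧
      (∀ f : ℝ≥0 → ℝ, Continuous f → (∃ M, ∀ x, |f x| ≤ M) →
        ∀ δ > (0 : ℝ),
          Tendsto (fun t =>
              P {ω | δ < |(∫ x, f x ∂(ν t ω)) - ∫ x, f x ∂(νl ω)|})
            atTop (nhds 0)) ∧
      ∀ r : ℝ≥0, ∀ᵐ ω ∂P,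
        ContinuousAt (fun x : ℝ≥0 => ((νl ω) (Set.Ici x)).toReal) r →
          ((νl ω) (Set.Ici r)).toReal = F r ω := by
  -- Along a subsequence the tail at a given `r` and at all rationals converge simultaneously.
  have hsub : ∀ (r : ℝ≥0) (s : ℕ → ℝ), Tendsto s atTop atTop → ∃ φ : ℕ → ℕ, StrictMono φ ∧
      ∀ᵐ ω ∂P, Tendsto (fun n => (ν (s (φ n)) ω).real (Ici r)) atTop (𝓝 (F r ω)) ∧
        ∀ q : ℚ, Tendsto (fun n => (ν (s (φ n)) ω).real (Ici (Real.toNNReal q))) atTop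
          (𝓝 (F (Real.toNNReal q) ω)) := by
    intro r s hs
    obtain ⟨e, he⟩ := exists_surjective_nat (Option ℚ)
    set D : Option ℚ → ℝ≥0 := fun o => o.elim r fun q => Real.toNNReal q with hD
    obtain ⟨φ, hφ, h⟩ := exists_subseq P
      (fun n k ω => (ν (s n) ω).real (Ici (D (e k))) - F (D (e k)) ω)
      (fun k δ hδ => (hconv (D (e k)) δ hδ).comp hs)
    refine ⟨φ, hφ, h.mono fun ω hω => ?_⟩
    have hω' : ∀ o, Tendsto (fun n => (ν (s (φ n)) ω).real (Ici (D o))) atTop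
        (𝓝 (F (D o) ω)) := fun o => by
      obtain ⟨k, rfl⟩ := he o
      exact tendsto_sub_nhds_zero_iff.1 (hω k)
    exact ⟨hω' none, fun q => hω' (some q)⟩
  have hanti : ∀ a b : ℝ≥0, a ≤ b → ∀ t ω, (ν t ω).real (Ici b) ≤ (ν t ω).real (Ici a) :=
    fun a b hab t ω => measureReal_mono (Ici_subset_Ici.2 hab)
  -- Tightness forces `F M → 0` in probability.
  have hF0 : ∀ δ > (0 : ℝ), Tendsto (fun n : ℕ => P {ω | δ < |F n ω|}) atTop (𝓝 0) := by
    intro δ hδ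
    rw [ENNReal.tendsto_nhds_zero]
    intro η hη
    have hη2 : 0 < η / 2 := ENNReal.half_pos hη.ne'
    have h1 := ((htight (δ / 2) (half_pos hδ)).comp
      (tendsto_natCast_atTop_atTop (R := ℝ≥0))).eventually_lt_const hη2
    filter_upwards [h1] with n hn
    obtain ⟨t, ht1, ht2⟩ := ((eventually_lt_of_limsup_lt hn).and
      ((hconv n (δ / 2) (half_pos hδ)).eventually_lt_const hη2)).exists
    calc P {ω | δ < |F n ω|}
        ≤ P ({ω | δ / 2 < ((ν t ω) (Ici (n : ℝ≥0))).toReal} ∪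
            {ω | δ / 2 < |((ν t ω) (Ici (n : ℝ≥0))).toReal - F n ω|}) := by
          refine measure_mono fun ω hω => ?_
          by_contra! hc
          simp only [mem_union, mem_ofPred_eq, not_or, not_lt] at hc hω
          have h0 : 0 ≤ ((ν t ω) (Ici (n : ℝ≥0))).toReal := ENNReal.toReal_nonneg
          rw [abs_sub_comm] at hc
          have := abs_sub_abs_le_abs_sub (F n ω) ((ν t ω) (Ici (n : ℝ≥0))).toReal
          rw [abs_of_nonneg h0] at this
          linarith
      _ ≤ η / 2 + η / 2 := (measure_union_le _ _).trans (add_le_add ht1.le ht2.le)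
      _ = η := ENNReal.add_halves η
  have hgood : ∀ᵐ ω ∂P, GoodTail fun q : ℚ => F (Real.toNNReal q) ω := by
    obtain ⟨φ, -, h⟩ := hsub 0 (fun n => n) tendsto_natCast_atTop_atTop
    obtain ⟨ψ, hψ, h'⟩ := exists_subseq P (fun n _ ω => F n ω) (fun _ => hF0)
    filter_upwards [h, h'] with ω hω hω'
    have hA : Antitone fun q : ℚ => F (Real.toNNReal q) ω := fun a b hab =>
      le_of_tendsto_of_tendsto' (hω.2 b) (hω.2 a) fun n =>
        hanti _ _ (Real.toNNReal_mono (by exact_mod_cast hab)) _ _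
    refine ⟨hA, fun q hq => ?_, ?_⟩
    · have h0 : Real.toNNReal q = 0 := Real.toNNReal_of_nonpos (by exact_mod_cast hq)
      have h1 : Ici (0 : ℝ≥0) = univ := by ext; simp
      have := hω.2 q
      simp only [h0, h1, probReal_univ] at this ⊢
      exact tendsto_nhds_unique this tendsto_const_nhds
    · have hnn : ∀ q : ℚ, 0 ≤ F (Real.toNNReal q) ω := fun q =>
        ge_of_tendsto' (hω.2 q) fun n => measureReal_nonneg
      rw [tendsto_order]
      refine ⟨fun a ha => Eventually.of_forall fun q => ha.trans_le (hnn q), fun a ha => ?_⟩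
      obtain ⟨n, hn⟩ := ((hω' 0).eventually_lt_const ha).exists
      filter_upwards [eventually_ge_atTop ((ψ n : ℕ) : ℚ)] with q hq
      refine (hA hq).trans_lt ?_
      simpa using hn
  obtain ⟨νl, hνm, hνp, hν⟩ := exists_limit (fun ω (q : ℚ) => F (Real.toNNReal q) ω)
    (fun q => hF _)
  have hDense : Dense (range fun q : ℚ => Real.toNNReal q) := by
    have : DenseRange (Real.toNNReal ∘ ((↑) : ℚ → ℝ)) :=
      (show Function.Surjective Real.toNNReal from fun x => ⟨x, Real.toNNReal_coe⟩).denseRange.comp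
        Rat.denseRange_cast continuous_real_toNNReal
    exact this
  have hweak : ∀ ω, GoodTail (fun q : ℚ => F (Real.toNNReal q) ω) → ∀ s : ℕ → ℝ,
      (∀ q : ℚ, Tendsto (fun n => (ν (s n) ω).real (Ici (Real.toNNReal q))) atTop
          (𝓝 (F (Real.toNNReal q) ω))) →
      Tendsto (β := ProbabilityMeasure ℝ≥0) (fun n => ⟨ν (s n) ω, hprob _ _⟩) atTop
        (𝓝 ⟨νl ω, hνp ω⟩) := by
    intro ω hω s hs
    refine tendsto_of_tail hDense (g := fun r => F r ω) ?_ ?_ ?_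
    · rintro _ ⟨q, rfl⟩; exact hs q
    · rintro _ ⟨q, rfl⟩; exact (hν ω hω q).1
    · rintro _ ⟨q, rfl⟩; exact (hν ω hω q).2
  refine ⟨νl, hνm, hνp, ?_, ?_⟩
  · rintro f hf ⟨M, hM⟩ δ hδ
    have hint : ∀ κ : Ω → Measure ℝ≥0, Measurable κ → (∀ ω, IsProbabilityMeasure (κ ω)) →
        StronglyMeasurable fun ω => ∫ x, f x ∂(κ ω) := fun κ hκ _ =>
      StronglyMeasurable.integral_kernel (κ := ⟨κ, hκ⟩) hf.stronglyMeasurable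
    refine tendsto_of_subseq_tendsto fun s hs => ?_
    obtain ⟨φ, -, h⟩ := hsub 0 s hs
    refine ⟨φ, ?_⟩
    have hae : ∀ᵐ ω ∂P, Tendsto (fun n => ∫ x, f x ∂(ν (s (φ n)) ω)) atTop
        (𝓝 (∫ x, f x ∂(νl ω))) := by
      filter_upwards [h, hgood] with ω hω hg
      exact ProbabilityMeasure.tendsto_iff_forall_integral_tendsto.1
        (hweak ω hg (fun n => s (φ n)) hω.2)
        (BoundedContinuousFunction.ofNormedAddCommGroup f hf M hM)
    have hTM := tendstoInMeasure_iff_norm.1 (tendstoInMeasure_of_tendsto_ae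
      (fun n => (hint _ (hmeas (s (φ n))) (hprob _)).aestronglyMeasurable) hae) δ hδ
    refine tendsto_of_tendsto_of_tendsto_of_le_of_le tendsto_const_nhds hTM
      (fun _ => zero_le) fun n => measure_mono fun ω hω => ?_
    exact le_of_lt (show δ < |_| from hω)
  · intro r
    obtain ⟨φ, -, h⟩ := hsub r (fun n => n) tendsto_natCast_atTop_atTop
    filter_upwards [h, hgood] with ω hω hg hcont
    have hlow : ∀ x, r < x → (νl ω).real (Ici x) ≤ F r ω := by
      intro x hx
      obtain ⟨_, ⟨q, rfl⟩, hrq, hqx⟩ := hDense.exists_between hx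
      calc (νl ω).real (Ici x) ≤ (νl ω).real (Ioi (Real.toNNReal q)) :=
            measureReal_mono (Ici_subset_Ioi.2 hqx)
        _ ≤ F (Real.toNNReal q) ω := (hν ω hg q).1
        _ ≤ F r ω := le_of_tendsto_of_tendsto' (hω.2 q) hω.1 fun n => hanti _ _ hrq.le _ _
    apply le_antisymm
    · exact le_of_tendsto (hcont.tendsto.mono_left nhdsWithin_le_nhds : Tendsto _ (𝓝[>] r) _)
        (eventually_mem_nhdsWithin.mono fun x hx => hlow x hx)
    · by_contra! hlt
      rcases eq_or_ne r 0 with rfl | hr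
      · have h0 := (hν ω hg 0).2
        simp only [Rat.cast_zero, Real.toNNReal_zero] at h0
        exact h0.not_gt hlt
      · obtain ⟨x, hxr, hx⟩ := exists_real_Ici_lt _ (pos_iff_ne_zero.2 hr) hlt
        obtain ⟨_, ⟨q, rfl⟩, hxq, hqr⟩ := hDense.exists_between hxr
        have h1 : F r ω ≤ F (Real.toNNReal q) ω :=
          le_of_tendsto_of_tendsto' hω.1 (hω.2 q) fun n => hanti _ _ hqr.le _ _
        have h2 := (hν ω hg q).2
        have h3 : (νl ω).real (Ici (Real.toNNReal q)) ≤ (νl ω).real (Ici x) :=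
          measureReal_mono (Ici_subset_Ici.2 hxq.le)
        linarith
end

section
/- There exists a constant C > 0 such that for all t ≥ 3, all r ≥ 0, all K ≥ 0 and all x ∈ [0, t]: ∫_{−K}^{x} (√r + z) · exp( √2·z − (3·log t/(2√2·t))·z − z²/(2t) ) dz ≤ C·(√r + x)·exp( √2·x − (3·log t/(2√2·t))·x − x²/(2t) ). -/
/-!
Write `φ` for the exponent. Since `log t / t ≤ 1/e`, the slope satisfies
`φ'(x) ≥ √2 - 1 - 3/(2√2 e) > 1/50` for all `x ≤ t`, and `φ` is concave, so
`φ z ≤ φ x - (x - z)/50` for `z ≤ x`. As `√r + z ≤ √r + x`, the integrand is at most its value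
at `x` times `exp (-(x - z)/50)`, whose integral over `(-∞, x]` is `50`.
-/

open MeasureTheory

/-- The linear drift correction leaves a slope of at least `1/50` after subtracting `1`.
The margin is thin: the minimum of `√2 - 1 - 3 log t/(2√2 t)` over `t ≥ 3` is about `0.026`. -/
lemma drift_le {t : ℝ} (ht : 3 ≤ t) :
    3 * Real.log t / (2 * Real.sqrt 2 * t) ≤ Real.sqrt 2 - 1 - 1 / 50 := by
  have h2 : (1.414 : ℝ) ≤ Real.sqrt 2 := Real.le_sqrt_of_sq_le (by norm_num)
  have ht0 : 0 < t := by linarith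
  -- `log s ≤ s - 1` at `s = t / e`
  have hlog : Real.log t ≤ t * 0.368 := by
    have h := Real.log_le_sub_one_of_pos (div_pos ht0 (Real.exp_pos 1))
    rw [Real.log_div ht0.ne' (Real.exp_pos 1).ne', Real.log_exp] at h
    have he : t / Real.exp 1 ≤ t * 0.368 := by
      rw [div_le_iff₀ (Real.exp_pos 1)]
      nlinarith [Real.exp_one_gt_d9]
    linarith
  have h : 3 * Real.log t / (2 * Real.sqrt 2 * t) ≤ 0.391 := by
    rw [div_le_iff₀ (by positivity)]
    nlinarith [mul_le_mul_of_nonneg_right h2 ht0.le]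
  linarith

lemma exponent_le {t a x z : ℝ} (ht : 0 < t) (ha : a ≤ Real.sqrt 2 - 1 - 1 / 50)
    (hxt : x ≤ t) (hzx : z ≤ x) :
    Real.sqrt 2 * z - a * z - z ^ 2 / (2 * t)
      ≤ (Real.sqrt 2 * x - a * x - x ^ 2 / (2 * t)) + (z - x) / 50 := by
  have h1 : x ^ 2 / (2 * t) - z ^ 2 / (2 * t) ≤ x - z := by
    rw [← sub_div, div_le_iff₀ (by positivity)]
    nlinarith [mul_nonneg (sub_nonneg.2 hzx) (by linarith : 0 ≤ 2 * t - (x + z))]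
  nlinarith [mul_nonneg (sub_nonneg.2 hzx) (sub_nonneg.2 ha)]

lemma integral_exp_le {K x : ℝ} (h : -K ≤ x) :
    ∫ z in Set.Icc (-K) x, Real.exp ((z - x) / 50) ≤ 50 := by
  rw [integral_Icc_eq_integral_Ioc, ← intervalIntegral.integral_of_le h,
    intervalIntegral.integral_eq_sub_of_hasDerivAt
      (f := fun z => 50 * Real.exp ((z - x) / 50))]
  · simp [Real.exp_nonneg]
  · intro z _
    have := ((((hasDerivAt_id z).sub_const x).div_const 50).exp).const_mul 50
    exact this.congr_deriv (by simp only [id_eq]; ring)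
  · exact (by fun_prop : Continuous fun z : ℝ => Real.exp ((z - x) / 50)).intervalIntegrable _ _

/-- Laplace-method estimate: the integral over `[-K, x]` of
`(√r + z) exp(√2 z − (3 log t/(2√2 t)) z − z²/(2t))` is bounded by a universal
constant times the value of the integrand at the right endpoint `x`,
uniformly for `t ≥ 3`, `r ≥ 0`, `K ≥ 0` and `x ∈ [0, t]`. -/
theorem laplace_method_estimate :
    ∃ C > (0 : ℝ), ∀ t : ℝ, 3 ≤ t → ∀ r : ℝ, 0 ≤ r → ∀ K : ℝ, 0 ≤ K →
      ∀ x ∈ Set.Icc (0 : ℝ) t,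
        (∫ z in Set.Icc (-K) x, (Real.sqrt r + z) *
            Real.exp (Real.sqrt 2 * z - (3 * Real.log t / (2 * Real.sqrt 2 * t)) * z
              - z ^ 2 / (2 * t)))
          ≤ C * (Real.sqrt r + x) *
            Real.exp (Real.sqrt 2 * x - (3 * Real.log t / (2 * Real.sqrt 2 * t)) * x
              - x ^ 2 / (2 * t)) := by
  refine ⟨50, by norm_num, fun t ht r _ K hK x hx => ?_⟩
  have ha := drift_le ht
  set a := 3 * Real.log t / (2 * Real.sqrt 2 * t)
  set E := Real.exp (Real.sqrt 2 * x - a * x - x ^ 2 / (2 * t)) with hE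
  have hs : 0 ≤ Real.sqrt r + x := add_nonneg (Real.sqrt_nonneg r) hx.1
  calc _ ≤ ∫ z in Set.Icc (-K) x, ((Real.sqrt r + x) * E) * Real.exp ((z - x) / 50) := by
        refine setIntegral_mono_on ?_ ?_ measurableSet_Icc fun z hz => ?_
        · exact (by fun_prop : Continuous _).integrableOn_Icc
        · exact (by fun_prop : Continuous _).integrableOn_Icc
        · rw [mul_assoc, hE, ← Real.exp_add]
          -- the sign of `√r + z` is irrelevant: only the larger factor `√r + x` must be nonnegative
          refine mul_le_mul (by linarith [hz.2]) ?_ (Real.exp_nonneg _) hs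
          exact Real.exp_le_exp.2 (exponent_le (by linarith) ha hx.2 hz.2)
    _ = ((Real.sqrt r + x) * E) * ∫ z in Set.Icc (-K) x, Real.exp ((z - x) / 50) :=
        integral_const_mul _ _
    _ ≤ ((Real.sqrt r + x) * E) * 50 :=
        mul_le_mul_of_nonneg_left (integral_exp_le (by linarith [hx.1]))
          (mul_nonneg hs (Real.exp_nonneg _))
    _ = _ := by ring
end
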